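/- Let (p₁,p₂,p₃,p₄) and (q₁,q₂,q₃,q₄) be admissible quadruples. Suppose that for every α > 0 and every h ∈ C₀([0,∞)) the cross-multiplied identity (2p₂·∫₀^∞ e^{−√(2α)x}h(x)dx + p₃·h(0) + ∫_{(0,∞)} G⁰_α h dp₄)·(q₁ + √(2α)·q₂ + α·q₃ + ∫_{(0,∞)}(1 − e^{−√(2α)x}) dq₄) = (2q₂·∫₀^∞ e^{−√(2α)x}h(x)dx + q₃·h(0) + ∫_{(0,∞)} G⁰_α h dq₄)·(p₁ + √(2α)·p₂ + α·p₃ + ∫_{(0,∞)}(1 − e^{−√(2α)x}) dp₄) holds. Then p₁ = q₁, p₂ = q₂, p₃ = q₃, and p₄ = q₄ as measures. (Uniqueness of the four boundary parameters of a Feller's Brownian motion.) -/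

import Mathlib

open MeasureTheory Real Filter Topology

/-- The resolvent density of killed Brownian motion on `(0,∞)`. -/
noncomputable def g0 (α x y : ℝ) : ℝ :=
  (2 / Real.sqrt (2 * α)) * Real.sinh (Real.sqrt (2 * α) * min x y) *
    Real.exp (-(Real.sqrt (2 * α) * max x y))

/-- The resolvent `G⁰_α h` of killed Brownian motion on `(0,∞)`. -/
noncomputable def G0 (α : ℝ) (h : ℝ → ℝ) (x : ℝ) : ℝ :=
  ∫ y in Set.Ioi (0 : ℝ), g0 α x y * h y

/-- `h ∈ C₀([0,∞))`: continuous on `[0,∞)` and vanishing at infinity. -/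
def MemC0 (h : ℝ → ℝ) : Prop :=
  ContinuousOn h (Set.Ici 0) ∧ Filter.Tendsto h Filter.atTop (nhds 0)

/-- An admissible quadruple `(p₁,p₂,p₃,p₄)`: `p₁,p₂,p₃ ≥ 0`, `p₄` a positive Borel
measure carried by `(0,∞)` with `∫ min(1,x) p₄(dx) < ∞`, normalized by
`p₁+p₂+p₃+∫ min(x,1) p₄(dx) = 1`, and `|p₄| = ∞` whenever `p₂ = p₃ = 0`. -/
def IsAdmissible (p₁ p₂ p₃ : ℝ) (p₄ : Measure ℝ) : Prop :=
  0 ≤ p₁ ∧ 0 ≤ p₂ ∧ 0 ≤ p₃ ∧ p₄ (Set.Iic 0) = 0 ∧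
  (∫⁻ x in Set.Ioi (0 : ℝ), ENNReal.ofReal (min 1 x) ∂p₄) < ⊤ ∧
  p₁ + p₂ + p₃ + (∫ x in Set.Ioi (0 : ℝ), min x 1 ∂p₄) = 1 ∧
  (p₂ = 0 ∧ p₃ = 0 → p₄ (Set.Ioi 0) = ⊤)

lemma aux_lt {x : ℝ} (h : x < 0) : Real.exp x < 1 := by
  rw [← Real.exp_zero]; exact Real.exp_lt_exp.2 h

/-- Two finite measures on `[0,1]` with equal moments are equal. -/
lemma aux_moments (μ ν : Measure unitInterval) [IsFiniteMeasure μ] [IsFiniteMeasure ν]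
    (h : ∀ n : ℕ, ∫ x, (x : ℝ) ^ n ∂μ = ∫ x, (x : ℝ) ^ n ∂ν) : μ = ν := by
  have hint : ∀ (ρ : Measure unitInterval) [IsFiniteMeasure ρ] (f : C(unitInterval, ℝ)),
      Integrable f ρ := fun ρ _ f => by
    have := (BoundedContinuousFunction.mkOfCompact f).integrable ρ
    exact this
  have hpoly : ∀ p : Polynomial ℝ,
      ∫ x : unitInterval, p.eval (x : ℝ) ∂μ = ∫ x : unitInterval, p.eval (x : ℝ) ∂ν := by
    intro p
    have hi : ∀ (ρ : Measure unitInterval) [IsFiniteMeasure ρ], ∀ i : ℕ,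
        Integrable (fun x : unitInterval => p.coeff i * (x : ℝ) ^ i) ρ := fun ρ _ i =>
      hint ρ ⟨fun x : unitInterval => p.coeff i * (x : ℝ) ^ i, by fun_prop⟩
    simp only [Polynomial.eval_eq_sum_range]
    rw [integral_finsetSum _ (fun i _ => hi μ i), integral_finsetSum _ (fun i _ => hi ν i)]
    refine Finset.sum_congr rfl fun i _ => ?_
    rw [integral_const_mul, integral_const_mul, h]
  apply ext_of_forall_integral_eq_of_IsFiniteMeasure
  intro f
  have hcl : IsClosed {g : C(unitInterval, ℝ) | ∫ x, g x ∂μ = ∫ x, g x ∂ν} := by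
    have hc : ∀ (ρ : Measure unitInterval) [IsFiniteMeasure ρ],
        Continuous (fun g : C(unitInterval, ℝ) => ∫ x, g x ∂ρ) := by
      intro ρ _
      rw [continuous_iff_continuousAt]
      intro g
      refine tendsto_integral_filter_of_dominated_convergence (fun _ => ‖g‖ + 1) ?_ ?_ ?_ ?_
      · exact Eventually.of_forall fun g => g.continuous.aestronglyMeasurable
      · filter_upwards [Metric.ball_mem_nhds g one_pos] with k hk
        refine Eventually.of_forall fun x => (k.norm_coe_le_norm x).trans ?_
        rw [mem_ball_iff_norm] at hk
        have := norm_sub_norm_le k g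
        linarith
      · exact integrable_const _
      · exact Eventually.of_forall fun x =>
          (continuous_eval_const x).tendsto g
    exact isClosed_eq (hc μ) (hc ν)
  have hsub : ((polynomialFunctions unitInterval : Subalgebra ℝ C(unitInterval, ℝ)) :
      Set C(unitInterval, ℝ)) ⊆ {g : C(unitInterval, ℝ) | ∫ x, g x ∂μ = ∫ x, g x ∂ν} := by
    intro g hg
    rw [polynomialFunctions_coe] at hg
    obtain ⟨p, rfl⟩ := hg
    exact hpoly p
  have hmem : (f.toContinuousMap) ∈ (polynomialFunctions unitInterval).topologicalClosure := by
    rw [polynomialFunctions_closure_eq_top']; trivial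
  exact closure_minimal hsub hcl hmem

/-- Laplace transforms at integers determine finite measures on `(0,∞)`. -/
lemma aux_laplace (μ ν : Measure ℝ) [IsFiniteMeasure μ] [IsFiniteMeasure ν]
    (hμ : μ (Set.Iic 0) = 0) (hν : ν (Set.Iic 0) = 0)
    (h : ∀ n : ℕ, ∫ x, Real.exp (-(n * x)) ∂μ = ∫ x, Real.exp (-(n * x)) ∂ν) : μ = ν := by
  let T : ℝ → unitInterval := fun x => Set.projIcc 0 1 zero_le_one (Real.exp (-x))
  let S : unitInterval → ℝ := fun y => -Real.log y
  have hT : Measurable T := (continuous_projIcc.comp (by fun_prop)).measurable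
  have hS : Measurable S := by
    have : Measurable (fun y : unitInterval => (y : ℝ)) := measurable_subtype_coe
    exact (Real.measurable_log.comp this).neg
  have hTv : ∀ x : ℝ, 0 < x → (T x : ℝ) = Real.exp (-x) := by
    intro x hx
    have : Real.exp (-x) ∈ Set.Icc (0:ℝ) 1 :=
      ⟨(Real.exp_pos _).le, Real.exp_le_one_iff.2 (by linarith)⟩
    simp only [T, Set.projIcc_of_mem zero_le_one this]
  have hae : ∀ (ρ : Measure ℝ), ρ (Set.Iic 0) = 0 → ∀ᵐ x ∂ρ, 0 < x := by
    intro ρ hρ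
    rw [ae_iff]; convert hρ using 2; ext x; simp
  have hrec : ∀ (ρ : Measure ℝ), ρ (Set.Iic 0) = 0 → (ρ.map T).map S = ρ := by
    intro ρ hρ
    rw [Measure.map_map hS hT]
    conv_rhs => rw [← Measure.map_id (μ := ρ)]
    apply Measure.map_congr
    filter_upwards [hae ρ hρ] with x hx
    simp [S, hTv x hx]
  have hmom : ∀ (ρ : Measure ℝ), ρ (Set.Iic 0) = 0 → ∀ n : ℕ,
      ∫ y, (y : ℝ) ^ n ∂(ρ.map T) = ∫ x, Real.exp (-(n * x)) ∂ρ := by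
    intro ρ hρ n
    rw [integral_map hT.aemeasurable
      (by exact (Continuous.aestronglyMeasurable (by fun_prop)))]
    apply integral_congr_ae
    filter_upwards [hae ρ hρ] with x hx
    rw [hTv x hx, ← Real.exp_nat_mul]
    ring_nf
  have : μ.map T = ν.map T := by
    apply aux_moments
    intro n
    rw [hmom μ hμ, hmom ν hν, h]
  rw [← hrec μ hμ, ← hrec ν hν, this]

lemma aux_bound {s x : ℝ} (hs : 0 ≤ s) (hx : 0 < x) :
    ‖1 - Real.exp (-(s * x))‖ ≤ max s 1 * min x 1 := by
  have h1 : Real.exp (-(s * x)) ≤ 1 := Real.exp_le_one_iff.2 (by nlinarith)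
  have h2 := Real.add_one_le_exp (-(s * x))
  have h3 := Real.exp_pos (-(s * x))
  rw [Real.norm_of_nonneg (by linarith)]
  have := le_max_left s 1
  have := le_max_right s 1
  rcases min_cases x 1 with ⟨h, _⟩ | ⟨h, _⟩ <;> rw [h] <;> nlinarith

lemma aux_ae_pos {ρ : Measure ℝ} (hρ : ρ (Set.Iic 0) = 0) : ∀ᵐ x ∂ρ, 0 < x := by
  rw [ae_iff]; convert hρ using 2; ext x; simp

lemma aux_integrable {μ : Measure ℝ} (hμ : μ (Set.Iic 0) = 0)
    (hi : Integrable (fun x : ℝ => min x 1) μ) {s : ℝ} (hs : 0 ≤ s) :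
    Integrable (fun x => 1 - Real.exp (-(s * x))) μ := by
  refine (hi.const_mul (max s 1)).mono' (Continuous.aestronglyMeasurable (by fun_prop)) ?_
  filter_upwards [aux_ae_pos hμ] with x hx
  exact aux_bound hs hx

/-- The jump measure is determined by its Bernstein function. -/
lemma aux_measure (μ ν : Measure ℝ) (hμ : μ (Set.Iic 0) = 0) (hν : ν (Set.Iic 0) = 0)
    (hiμ : Integrable (fun x : ℝ => min x 1) μ) (hiν : Integrable (fun x : ℝ => min x 1) ν)
    (h : ∀ s : ℝ, 0 < s →
      ∫ x, (1 - Real.exp (-(s * x))) ∂μ = ∫ x, (1 - Real.exp (-(s * x))) ∂ν) : μ = ν := by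
  let w : ℝ → ENNReal := fun x => ENNReal.ofReal (1 - Real.exp (-x))
  have hw : Measurable w := by fun_prop
  have hinv : ∀ ρ : Measure ℝ, ρ (Set.Iic 0) = 0 → (ρ.withDensity w).withDensity w⁻¹ = ρ := by
    intro ρ hρ
    apply withDensity_inv_same hw
    · filter_upwards [aux_ae_pos hρ] with x hx
      have : Real.exp (-x) < 1 := aux_lt (by linarith)
      simp only [w, ne_eq, ENNReal.ofReal_eq_zero, not_le]; linarith
    · exact Eventually.of_forall fun x => ENNReal.ofReal_ne_top
  have hfin : ∀ ρ : Measure ℝ, ρ (Set.Iic 0) = 0 → Integrable (fun x : ℝ => min x 1) ρ →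
      IsFiniteMeasure (ρ.withDensity w) := by
    intro ρ hρ hi
    have := aux_integrable hρ hi (s := 1) zero_le_one
    simp only [one_mul] at this
    exact isFiniteMeasure_withDensity_ofReal this.2
  have hval : ∀ ρ : Measure ℝ, ρ (Set.Iic 0) = 0 → Integrable (fun x : ℝ => min x 1) ρ →
      ∀ n : ℕ, ∫ x, Real.exp (-(n * x)) ∂(ρ.withDensity w) =
        (∫ x, (1 - Real.exp (-(((n : ℝ) + 1) * x))) ∂ρ) - ∫ x, (1 - Real.exp (-((n : ℝ) * x))) ∂ρ := by
    intro ρ hρ hi n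
    rw [integral_withDensity_eq_integral_toReal_smul hw
      (Eventually.of_forall fun x => ENNReal.ofReal_lt_top),
      ← integral_sub (aux_integrable hρ hi (by positivity)) (aux_integrable hρ hi (by positivity))]
    apply integral_congr_ae
    filter_upwards [aux_ae_pos hρ] with x hx
    have : Real.exp (-x) < 1 := aux_lt (by linarith)
    simp only [w, smul_eq_mul]
    rw [ENNReal.toReal_ofReal (by linarith),
      show -(((n : ℝ) + 1) * x) = -x + -(n * x) by ring, Real.exp_add]
    ring
  have := hfin μ hμ hiμ
  have := hfin ν hν hiν
  have key : μ.withDensity w = ν.withDensity w := by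
    apply aux_laplace
    · exact withDensity_absolutelyContinuous _ _ hμ
    · exact withDensity_absolutelyContinuous _ _ hν
    · intro n
      rw [hval μ hμ hiμ, hval ν hν hiν, h _ (by positivity)]
      rcases Nat.eq_zero_or_pos n with rfl | hn
      · simp
      · rw [h n (by exact_mod_cast hn)]
  rw [← hinv μ hμ, ← hinv ν hν, key]

lemma aux_lim_zero {μ : Measure ℝ} (hμ : μ (Set.Iic 0) = 0)
    (hi : Integrable (fun x : ℝ => min x 1) μ) :
    Tendsto (fun s : ℝ => ∫ x, (1 - Real.exp (-(s * x))) ∂μ) (𝓝[>] 0) (𝓝 0) := by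
  have : Tendsto (fun s : ℝ => ∫ x, (1 - Real.exp (-(s * x))) ∂μ) (𝓝[>] 0)
      (𝓝 (∫ _, (0 : ℝ) ∂μ)) := by
    refine tendsto_integral_filter_of_dominated_convergence (fun x => min x 1) ?_ ?_ hi ?_
    · exact Eventually.of_forall fun s => Continuous.aestronglyMeasurable (by fun_prop)
    · filter_upwards [Ioo_mem_nhdsGT (zero_lt_one' ℝ)] with s hs
      filter_upwards [aux_ae_pos hμ] with x hx
      have := aux_bound hs.1.le hx
      rwa [max_eq_right hs.2.le, one_mul] at this
    · refine Eventually.of_forall fun x => ?_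
      have : Continuous (fun s : ℝ => 1 - Real.exp (-(s * x))) := by fun_prop
      have := this.tendsto 0
      simp only [zero_mul, neg_zero, Real.exp_zero, sub_self] at this
      exact this.mono_left nhdsWithin_le_nhds
  simpa using this

lemma aux_lim_inf {μ : Measure ℝ} (hμ : μ (Set.Iic 0) = 0)
    (hi : Integrable (fun x : ℝ => min x 1) μ) :
    Tendsto (fun s : ℝ => s⁻¹ * ∫ x, (1 - Real.exp (-(s * x))) ∂μ) atTop (𝓝 0) := by
  have : Tendsto (fun s : ℝ => ∫ x, s⁻¹ * (1 - Real.exp (-(s * x))) ∂μ) atTop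
      (𝓝 (∫ _, (0 : ℝ) ∂μ)) := by
    refine tendsto_integral_filter_of_dominated_convergence (fun x => min x 1) ?_ ?_ hi ?_
    · exact Eventually.of_forall fun s => Continuous.aestronglyMeasurable (by fun_prop)
    · filter_upwards [eventually_ge_atTop 1] with s hs
      filter_upwards [aux_ae_pos hμ] with x hx
      have := aux_bound (zero_le_one.trans hs) hx
      rw [max_eq_left hs] at this
      have hs0 : 0 < s := by linarith
      rw [norm_mul, norm_inv, Real.norm_of_nonneg hs0.le, inv_mul_le_iff₀ hs0]
      exact this
    · filter_upwards [aux_ae_pos hμ] with x hx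
      refine squeeze_zero_norm' (a := fun s : ℝ => s⁻¹) ?_ tendsto_inv_atTop_zero
      filter_upwards [eventually_gt_atTop 0] with s hs
      have h1 : Real.exp (-(s * x)) ≤ 1 := Real.exp_le_one_iff.2 (by nlinarith)
      have h3 := Real.exp_pos (-(s * x))
      rw [norm_mul, norm_inv, Real.norm_of_nonneg hs.le, Real.norm_of_nonneg (by linarith)]
      exact mul_le_of_le_one_right (inv_nonneg.2 hs.le) (by linarith)
  simpa [integral_const_mul] using this

/-- The function `N` determines the quadruple. -/
lemma aux_unique (p₁ p₂ p₃ q₁ q₂ q₃ : ℝ) (μ ν : Measure ℝ)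
    (hμ : μ (Set.Iic 0) = 0) (hν : ν (Set.Iic 0) = 0)
    (hiμ : Integrable (fun x : ℝ => min x 1) μ) (hiν : Integrable (fun x : ℝ => min x 1) ν)
    (h : ∀ s : ℝ, 0 < s →
      p₁ + s * p₂ + s ^ 2 / 2 * p₃ + ∫ x, (1 - Real.exp (-(s * x))) ∂μ =
      q₁ + s * q₂ + s ^ 2 / 2 * q₃ + ∫ x, (1 - Real.exp (-(s * x))) ∂ν) :
    p₁ = q₁ ∧ p₂ = q₂ ∧ p₃ = q₃ ∧ μ = ν := by
  have hinv : Tendsto (fun s : ℝ => s⁻¹) atTop (𝓝 0) := tendsto_inv_atTop_zero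
  have e1 : p₁ = q₁ := by
    have hl : ∀ (a b c : ℝ) (ρ : Measure ℝ), ρ (Set.Iic 0) = 0 →
        Integrable (fun x : ℝ => min x 1) ρ →
        Tendsto (fun s : ℝ => a + s * b + s ^ 2 / 2 * c + ∫ x, (1 - Real.exp (-(s * x))) ∂ρ)
          (𝓝[>] 0) (𝓝 a) := by
      intro a b c ρ h0 hi
      have hc : Continuous (fun s : ℝ => a + s * b + s ^ 2 / 2 * c) := by fun_prop
      have := ((hc.tendsto 0).mono_left (nhdsWithin_le_nhds (s := Set.Ioi 0))).add
        (aux_lim_zero h0 hi)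
      simpa using this
    refine tendsto_nhds_unique (hl p₁ p₂ p₃ μ hμ hiμ) ((hl q₁ q₂ q₃ ν hν hiν).congr' ?_)
    filter_upwards [self_mem_nhdsWithin] with s hs
    exact (h s hs).symm
  have e3 : p₃ = q₃ := by
    have hl : ∀ (a b c : ℝ) (ρ : Measure ℝ), ρ (Set.Iic 0) = 0 →
        Integrable (fun x : ℝ => min x 1) ρ →
        Tendsto (fun s : ℝ => 2 * s⁻¹ * s⁻¹ *
          (a + s * b + s ^ 2 / 2 * c + ∫ x, (1 - Real.exp (-(s * x))) ∂ρ))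
          atTop (𝓝 c) := by
      intro a b c ρ h0 hi
      have := ((((hinv.mul hinv).mul_const (2 * a)).add (hinv.mul_const (2 * b))).add_const c).add
        ((hinv.const_mul 2).mul (aux_lim_inf h0 hi))
      simp only [mul_zero, zero_mul, zero_add, add_zero] at this
      refine this.congr' ?_
      filter_upwards [eventually_gt_atTop 0] with s hs
      field_simp
    refine tendsto_nhds_unique (hl p₁ p₂ p₃ μ hμ hiμ) ((hl q₁ q₂ q₃ ν hν hiν).congr' ?_)
    filter_upwards [eventually_gt_atTop 0] with s hs
    rw [h s hs]
  subst e1 e3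
  have e2 : p₂ = q₂ := by
    have hl : ∀ (b : ℝ) (ρ : Measure ℝ), ρ (Set.Iic 0) = 0 →
        Integrable (fun x : ℝ => min x 1) ρ →
        Tendsto (fun s : ℝ => s⁻¹ * (s * b + ∫ x, (1 - Real.exp (-(s * x))) ∂ρ))
          atTop (𝓝 b) := by
      intro b ρ h0 hi
      have := (aux_lim_inf h0 hi).const_add b
      rw [add_zero] at this
      refine this.congr' ?_
      filter_upwards [eventually_gt_atTop 0] with s hs
      field_simp
    refine tendsto_nhds_unique (hl p₂ μ hμ hiμ) ((hl q₂ ν hν hiν).congr' ?_)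
    filter_upwards [eventually_gt_atTop 0] with s hs
    congr 1
    linarith [h s hs]
  subst e2
  refine ⟨rfl, rfl, rfl, aux_measure μ ν hμ hν hiμ hiν fun s hs => ?_⟩
  linarith [h s hs]

lemma aux_intervalIntegral (c x : ℝ) (hc : c ≠ 0) :
    ∫ y in (0:ℝ)..x, Real.exp (c * y) = (Real.exp (c * x) - 1) / c := by
  rw [intervalIntegral.integral_comp_mul_left (fun y => Real.exp y) hc, integral_exp]
  simp; field_simp

/-- Explicit resolvent of the exponential. -/
lemma aux_G0 {s b x : ℝ} (hs : 0 < s) (hb : 0 < b) (hsb : s ≠ b) (hx : 0 < x) :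
    G0 (s ^ 2 / 2) (fun y => Real.exp (-(b * y))) x =
      2 / (s ^ 2 - b ^ 2) * (Real.exp (-(b * x)) - Real.exp (-(s * x))) := by
  have hsq : Real.sqrt (2 * (s ^ 2 / 2)) = s := by
    rw [mul_div_cancel₀ _ two_ne_zero, Real.sqrt_sq hs.le]
  have hcont : Continuous (fun y => g0 (s ^ 2 / 2) x y * Real.exp (-(b * y))) := by
    unfold g0; fun_prop
  have e1 : ∫ y in Set.Ioc 0 x, g0 (s ^ 2 / 2) x y * Real.exp (-(b * y)) =
      1 / s * Real.exp (-(s * x)) * ((Real.exp ((s - b) * x) - 1) / (s - b) -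
        (Real.exp (-(s + b) * x) - 1) / (-(s + b))) := by
    rw [← intervalIntegral.integral_of_le hx.le, ← aux_intervalIntegral _ _ (sub_ne_zero.2 hsb),
      ← aux_intervalIntegral _ _ (by linarith : -(s + b) ≠ 0),
      ← intervalIntegral.integral_sub
        (Continuous.intervalIntegrable (by fun_prop) _ _)
        (Continuous.intervalIntegrable (by fun_prop) _ _),
      ← intervalIntegral.integral_const_mul]
    apply intervalIntegral.integral_congr
    intro y hy
    rw [Set.uIcc_of_le hx.le] at hy
    simp only [g0, hsq, min_eq_right hy.2, max_eq_left hy.2, Real.sinh_eq]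
    rw [show (s - b) * y = s * y + -(b * y) by ring,
      show -(s + b) * y = -(s * y) + -(b * y) by ring, Real.exp_add, Real.exp_add]
    ring
  have e2f : ∀ y ∈ Set.Ioi x, g0 (s ^ 2 / 2) x y * Real.exp (-(b * y)) =
      2 / s * Real.sinh (s * x) * Real.exp (-(s + b) * y) := by
    intro y hy
    have hy : x ≤ y := le_of_lt hy
    simp only [g0, hsq, min_eq_left hy, max_eq_right hy]
    rw [show -(s + b) * y = -(s * y) + -(b * y) by ring, Real.exp_add]
    ring
  have hneg : -(s + b) < 0 := by linarith
  have e2 : ∫ y in Set.Ioi x, g0 (s ^ 2 / 2) x y * Real.exp (-(b * y)) =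
      2 / s * Real.sinh (s * x) * (-Real.exp (-(s + b) * x) / (-(s + b))) := by
    rw [setIntegral_congr_fun measurableSet_Ioi e2f, integral_const_mul,
      integral_exp_mul_Ioi hneg]
  have hi2 : IntegrableOn (fun y => g0 (s ^ 2 / 2) x y * Real.exp (-(b * y))) (Set.Ioi x) := by
    rw [integrableOn_congr_fun e2f measurableSet_Ioi]
    exact (integrableOn_exp_mul_Ioi hneg x).const_mul _
  unfold G0
  rw [← Set.Ioc_union_Ioi_eq_Ioi hx.le, setIntegral_union (Set.Ioc_disjoint_Ioi le_rfl)
    measurableSet_Ioi (hcont.integrableOn_Ioc) hi2, e1, e2, Real.sinh_eq,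
    show (s - b) * x = s * x + -(b * x) by ring,
    show -(s + b) * x = -(s * x) + -(b * x) by ring, Real.exp_add, Real.exp_add,
    Real.exp_neg (s * x)]
  have h1 : s - b ≠ 0 := sub_ne_zero.2 hsb
  have h2 : s + b ≠ 0 := by linarith
  have h3 : s ^ 2 - b ^ 2 ≠ 0 := by
    rw [sq_sub_sq]; exact mul_ne_zero h2 h1
  have h4 := Real.exp_ne_zero (s * x)
  rw [show s ^ 2 - b ^ 2 = (s + b) * (s - b) by ring]
  field_simp
  ring

lemma aux_A {p₂ p₃ s b : ℝ} {μ : Measure ℝ} (p₁ : ℝ) (hμ : μ (Set.Iic 0) = 0)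
    (hi : Integrable (fun x : ℝ => min x 1) μ) (hs : 0 < s) (hb : 0 < b) (hsb : s ≠ b) :
    2 * p₂ * (∫ x in Set.Ioi (0 : ℝ), Real.exp (-(s * x)) * Real.exp (-(b * x))) +
      p₃ * Real.exp (-(b * 0)) +
      ∫ x, G0 (s ^ 2 / 2) (fun y => Real.exp (-(b * y))) x ∂μ =
    2 / (s ^ 2 - b ^ 2) *
      ((p₁ + s * p₂ + s ^ 2 / 2 * p₃ + ∫ x, (1 - Real.exp (-(s * x))) ∂μ) -
       (p₁ + b * p₂ + b ^ 2 / 2 * p₃ + ∫ x, (1 - Real.exp (-(b * x))) ∂μ)) := by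
  have h1 : s - b ≠ 0 := sub_ne_zero.2 hsb
  have h2 : s + b ≠ 0 := by linarith
  have e1 : ∫ x in Set.Ioi (0 : ℝ), Real.exp (-(s * x)) * Real.exp (-(b * x)) = 1 / (s + b) := by
    simp_rw [← Real.exp_add, show ∀ x : ℝ, -(s * x) + -(b * x) = -(s + b) * x by intro x; ring]
    rw [integral_exp_mul_Ioi (by linarith : -(s + b) < 0)]
    rw [mul_zero, Real.exp_zero, neg_div_neg_eq]
  have e2 : ∫ x, G0 (s ^ 2 / 2) (fun y => Real.exp (-(b * y))) x ∂μ =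
      2 / (s ^ 2 - b ^ 2) * ((∫ x, (1 - Real.exp (-(s * x))) ∂μ) -
        ∫ x, (1 - Real.exp (-(b * x))) ∂μ) := by
    rw [← integral_sub (aux_integrable hμ hi hs.le) (aux_integrable hμ hi hb.le),
      ← integral_const_mul]
    apply integral_congr_ae
    filter_upwards [aux_ae_pos hμ] with x hx
    rw [aux_G0 hs hb hsb hx]
    ring
  rw [e1, e2, show s ^ 2 - b ^ 2 = (s + b) * (s - b) by ring]
  simp only [mul_zero, neg_zero, Real.exp_zero]
  field_simp
  ring

lemma aux_pos {p₁ p₂ p₃ s : ℝ} {μ : Measure ℝ} (h1 : 0 ≤ p₁) (h2 : 0 ≤ p₂) (h3 : 0 ≤ p₃)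
    (hμ : μ (Set.Iic 0) = 0) (hi : Integrable (fun x : ℝ => min x 1) μ)
    (hn : p₁ + p₂ + p₃ + (∫ x, min x 1 ∂μ) = 1) (hs : 0 < s) :
    0 < p₁ + s * p₂ + s ^ 2 / 2 * p₃ + ∫ x, (1 - Real.exp (-(s * x))) ∂μ := by
  have hnn : 0 ≤ᵐ[μ] fun x => 1 - Real.exp (-(s * x)) := by
    filter_upwards [aux_ae_pos hμ] with x hx
    have h1 : Real.exp (-(s * x)) ≤ 1 := Real.exp_le_one_iff.2 (by nlinarith)
    simpa using h1
  have h4 : 0 ≤ ∫ x, (1 - Real.exp (-(s * x))) ∂μ := integral_nonneg_of_ae hnn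
  have h5 : 0 ≤ s * p₂ := by positivity
  have h6 : 0 ≤ s ^ 2 / 2 * p₃ := by positivity
  by_contra hcon
  have z1 : p₁ = 0 := by linarith
  have z2 : s * p₂ = 0 := by linarith
  have z3 : s ^ 2 / 2 * p₃ = 0 := by linarith
  have z4 : ∫ x, (1 - Real.exp (-(s * x))) ∂μ = 0 := by linarith
  have zz2 : p₂ = 0 := by simpa [hs.ne'] using z2
  have zz3 : p₃ = 0 := by simpa [hs.ne'] using z3
  rw [integral_eq_zero_iff_of_nonneg_ae hnn (aux_integrable hμ hi hs.le)] at z4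
  have : (∫ x, min x 1 ∂μ) = 0 := by
    apply integral_eq_zero_of_ae
    filter_upwards [z4, aux_ae_pos hμ] with x hx hx0
    exfalso
    have h1 : Real.exp (-(s * x)) < 1 := aux_lt (by nlinarith)
    simp only [Pi.zero_apply] at hx
    linarith
  linarith

/-- Uniqueness of the four boundary parameters of a Feller's Brownian motion:
if two admissible quadruples satisfy the cross-multiplied resolvent identity for
all `α > 0` and all `h ∈ C₀([0,∞))`, then they coincide. -/
theorem stmt12 (p₁ p₂ p₃ : ℝ) (p₄ : Measure ℝ) (q₁ q₂ q₃ : ℝ) (q₄ : Measure ℝ)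
    (hp : IsAdmissible p₁ p₂ p₃ p₄) (hq : IsAdmissible q₁ q₂ q₃ q₄)
    (hid : ∀ α : ℝ, 0 < α → ∀ h : ℝ → ℝ, MemC0 h →
      (2 * p₂ * (∫ x in Set.Ioi (0 : ℝ), Real.exp (-(Real.sqrt (2 * α) * x)) * h x) +
          p₃ * h 0 + ∫ x in Set.Ioi (0 : ℝ), G0 α h x ∂p₄) *
        (q₁ + Real.sqrt (2 * α) * q₂ + α * q₃ +
          ∫ x in Set.Ioi (0 : ℝ), (1 - Real.exp (-(Real.sqrt (2 * α) * x))) ∂q₄) =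
      (2 * q₂ * (∫ x in Set.Ioi (0 : ℝ), Real.exp (-(Real.sqrt (2 * α) * x)) * h x) +
          q₃ * h 0 + ∫ x in Set.Ioi (0 : ℝ), G0 α h x ∂q₄) *
        (p₁ + Real.sqrt (2 * α) * p₂ + α * p₃ +
          ∫ x in Set.Ioi (0 : ℝ), (1 - Real.exp (-(Real.sqrt (2 * α) * x))) ∂p₄)) :
    p₁ = q₁ ∧ p₂ = q₂ ∧ p₃ = q₃ ∧ p₄ = q₄ := by
  obtain ⟨p1, p2, p3, hp0, hpf, hpn, -⟩ := hp
  obtain ⟨q1, q2, q3, hq0, hqf, hqn, -⟩ := hq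
  have hres : ∀ ρ : Measure ℝ, ρ (Set.Iic 0) = 0 → ρ.restrict (Set.Ioi 0) = ρ := fun ρ hρ =>
    Measure.restrict_eq_self_of_ae_mem (aux_ae_pos hρ)
  have hI : ∀ ρ : Measure ℝ, ρ (Set.Iic 0) = 0 →
      (∫⁻ x, ENNReal.ofReal (min 1 x) ∂ρ) < ⊤ → Integrable (fun x : ℝ => min x 1) ρ := by
    intro ρ hρ hf
    refine ⟨Continuous.aestronglyMeasurable (by fun_prop), ?_⟩
    rw [hasFiniteIntegral_iff_ofReal]
    · simpa only [min_comm] using hf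
    · filter_upwards [aux_ae_pos hρ] with x hx
      exact le_min hx.le zero_le_one
  rw [hres _ hp0] at hpf hpn
  rw [hres _ hq0] at hqf hqn
  simp only [hres _ hp0, hres _ hq0] at hid
  have hip := hI _ hp0 hpf
  have hiq := hI _ hq0 hqf
  set Np : ℝ → ℝ := fun s =>
    p₁ + s * p₂ + s ^ 2 / 2 * p₃ + ∫ x, (1 - Real.exp (-(s * x))) ∂p₄ with hNp
  set Nq : ℝ → ℝ := fun s =>
    q₁ + s * q₂ + s ^ 2 / 2 * q₃ + ∫ x, (1 - Real.exp (-(s * x))) ∂q₄ with hNq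
  have hNpp : ∀ s, 0 < s → 0 < Np s := fun s hs => aux_pos p1 p2 p3 hp0 hip hpn hs
  have hNqp : ∀ s, 0 < s → 0 < Nq s := fun s hs => aux_pos q1 q2 q3 hq0 hiq hqn hs
  have hcross : ∀ s b : ℝ, 0 < s → 0 < b → s ≠ b → Np b * Nq s = Nq b * Np s := by
    intro s b hs hb hsb
    have hsq : Real.sqrt (2 * (s ^ 2 / 2)) = s := by
      rw [mul_div_cancel₀ _ two_ne_zero, Real.sqrt_sq hs.le]
    have hC : MemC0 (fun y => Real.exp (-(b * y))) := by
      refine ⟨by fun_prop, ?_⟩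
      exact Real.tendsto_exp_neg_atTop_nhds_zero.comp (tendsto_id.const_mul_atTop hb)
    have := hid (s ^ 2 / 2) (by positivity) _ hC
    simp only [hsq] at this
    rw [aux_A p₁ hp0 hip hs hb hsb, aux_A q₁ hq0 hiq hs hb hsb] at this
    change 2 / (s ^ 2 - b ^ 2) * (Np s - Np b) * Nq s =
      2 / (s ^ 2 - b ^ 2) * (Nq s - Nq b) * Np s at this
    have h3 : 2 / (s ^ 2 - b ^ 2) ≠ 0 := by
      rw [sq_sub_sq]
      exact div_ne_zero two_ne_zero (mul_ne_zero (by linarith) (sub_ne_zero.2 hsb))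
    rw [mul_assoc, mul_assoc] at this
    have := mul_left_cancel₀ h3 this
    linarith
  obtain ⟨c, hc, hcN⟩ : ∃ c : ℝ, 0 < c ∧ ∀ s, 0 < s → Np s = c * Nq s := by
    have h1 := hNqp 1 one_pos
    refine ⟨Np 1 / Nq 1, div_pos (hNpp 1 one_pos) h1, fun s hs => ?_⟩
    by_cases hs1 : s = 1
    · subst hs1; field_simp
    · have := hcross s 1 hs one_pos hs1
      field_simp
      linarith
  have hint : ∀ f : ℝ → ℝ, ∫ x, f x ∂(ENNReal.ofReal c • q₄) = c * ∫ x, f x ∂q₄ := by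
    intro f
    rw [integral_smul_measure, ENNReal.toReal_ofReal hc.le, smul_eq_mul]
  have huniq := aux_unique p₁ p₂ p₃ (c * q₁) (c * q₂) (c * q₃) p₄ (ENNReal.ofReal c • q₄)
    hp0 (by simp [hq0]) hip (hiq.smul_measure ENNReal.ofReal_ne_top) (by
      intro s hs
      have := hcN s hs
      rw [hint]
      simp only [hNp, hNq] at this
      linarith)
  obtain ⟨r1, r2, r3, r4⟩ := huniq
  have hc1 : c = 1 := by
    rw [r1, r2, r3, r4, hint] at hpn
    have : c * (q₁ + q₂ + q₃ + ∫ x, min x 1 ∂q₄) = 1 := by linarith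
    rwa [hqn, mul_one] at this
  subst hc1
  simp only [one_mul, ENNReal.ofReal_one, one_smul] at r1 r2 r3 r4
  exact ⟨r1, r2, r3, r4⟩
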